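/- Let T ∈ (0,∞) and let (s,u) be a solution of problem (P) on (0,T] with initial data (s₀,φ) ∈ W. Assume there exists M > 0 such that 0 ≤ φ(x) ≤ M(s₀ − x) for all x ∈ [0,s₀] and 0 ≤ u(t,0)^p ≤ M for all t ∈ (0,T]. Then 0 ≤ u(t,x) ≤ M(s(t) − x) for all t ∈ [0,T] and x ∈ [0,s(t)]; in particular, s'(t) = −∂_x u(t,s(t)) ≤ M for all t ∈ (0,T]. -/

import Mathlib

open Set MeasureTheory Filter Topology Real
open scoped ENNReal

noncomputable section

/-- `(s₀, φ)` belongs to the class `W`: `s₀ ∈ (0,∞)`, `φ` is Lipschitz on `[0,s₀]`,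
not identically zero, nonnegative there, and vanishes at `s₀`. -/
def memW (s₀ : ℝ) (φ : ℝ → ℝ) : Prop :=
  0 < s₀ ∧ (∃ K : NNReal, LipschitzOnWith K φ (Icc 0 s₀)) ∧
    (∃ x ∈ Icc 0 s₀, φ x ≠ 0) ∧ (∀ x ∈ Icc 0 s₀, 0 ≤ φ x) ∧ φ s₀ = 0

/-- `(s,u)` is a solution of the one-phase Stefan problem (P) on `(0,T]` (finite `T`)
with exponent `p` and initial data `(s₀,φ)`. -/
structure IsSolOn (p s₀ : ℝ) (φ : ℝ → ℝ) (T : ℝ) (s : ℝ → ℝ) (u : ℝ → ℝ → ℝ) : Prop where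
  T_pos : 0 < T
  s_cont : ContinuousOn s (Icc 0 T)
  s_diff : ∀ t ∈ Ioc 0 T, DifferentiableAt ℝ s t
  s_deriv_cont : ContinuousOn (deriv s) (Ioc 0 T)
  s_pos : ∀ t ∈ Icc 0 T, 0 < s t
  ut_diff : ∀ t ∈ Ioc 0 T, ∀ x ∈ Ioo 0 (s t), DifferentiableAt ℝ (fun τ => u τ x) t
  ux_diff : ∀ t ∈ Ioc 0 T, ∀ x ∈ Ioo 0 (s t), DifferentiableAt ℝ (u t) x
  uxx_diff : ∀ t ∈ Ioc 0 T, ∀ x ∈ Ioo 0 (s t), DifferentiableAt ℝ (deriv (u t)) x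
  ut_cont : ContinuousOn (fun q : ℝ × ℝ => deriv (fun τ => u τ q.2) q.1)
      {q : ℝ × ℝ | q.1 ∈ Ioc 0 T ∧ q.2 ∈ Ioo 0 (s q.1)}
  uxx_cont : ContinuousOn (fun q : ℝ × ℝ => deriv (deriv (u q.1)) q.2)
      {q : ℝ × ℝ | q.1 ∈ Ioc 0 T ∧ q.2 ∈ Ioo 0 (s q.1)}
  ux_cont : ContinuousOn (fun q : ℝ × ℝ => deriv (u q.1) q.2)
      {q : ℝ × ℝ | q.1 ∈ Ioc 0 T ∧ q.2 ∈ Icc 0 (s q.1)}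
  u_cont : ContinuousOn (fun q : ℝ × ℝ => u q.1 q.2)
      {q : ℝ × ℝ | q.1 ∈ Icc 0 T ∧ q.2 ∈ Icc 0 (s q.1)}
  u_nonneg : ∀ t ∈ Icc 0 T, ∀ x ∈ Icc 0 (s t), 0 ≤ u t x
  heat : ∀ t ∈ Ioc 0 T, ∀ x ∈ Ioo 0 (s t),
      deriv (fun τ => u τ x) t = deriv (deriv (u t)) x
  bc_zero : ∀ t ∈ Ioc 0 T, -deriv (u t) 0 = u t 0 ^ p
  bc_free : ∀ t ∈ Ioc 0 T, u t (s t) = 0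
  stefan : ∀ t ∈ Ioc 0 T, deriv s t = -deriv (u t) (s t)
  init : ∀ x ∈ Icc 0 s₀, u 0 x = φ x
  init_s : s 0 = s₀

/-- `(s,u)` is a global-in-time solution of problem (P). -/
def IsGlobalSol (p s₀ : ℝ) (φ : ℝ → ℝ) (s : ℝ → ℝ) (u : ℝ → ℝ → ℝ) : Prop :=
  ∀ T : ℝ, 0 < T → IsSolOn p s₀ φ T s u

/-- `Tm ∈ (0,∞]` is the maximal existence time of the solution `(s,u)` of (P) with
initial data `(s₀,φ)`: the solution exists on `(0,T]` for every `T < Tm`, and for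
`T > Tm` problem (P) admits no solution on `(0,T]`. -/
def IsMaxSol (p s₀ : ℝ) (φ : ℝ → ℝ) (Tm : ℝ≥0∞) (s : ℝ → ℝ) (u : ℝ → ℝ → ℝ) : Prop :=
  0 < Tm ∧
    (∀ T : ℝ, 0 < T → ENNReal.ofReal T < Tm → IsSolOn p s₀ φ T s u) ∧
    (∀ T : ℝ, Tm < ENNReal.ofReal T → ¬∃ σ v, IsSolOn p s₀ φ T σ v)

/-- The sup norm `‖u(t)‖_{L^∞(0,s(t))}`. -/
def supNorm (s : ℝ → ℝ) (u : ℝ → ℝ → ℝ) (t : ℝ) : ℝ :=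
  sSup (u t '' Ioo 0 (s t))

/-- The `L¹` norm `‖u(t)‖_{L¹(0,s(t))}` of the nonnegative function `u(t,·)`. -/
def L1Norm (s : ℝ → ℝ) (u : ℝ → ℝ → ℝ) (t : ℝ) : ℝ :=
  ∫ x in (0:ℝ)..(s t), u t x

/-- The energy `E(s(t),u(t))`. -/
def energy (p : ℝ) (s : ℝ → ℝ) (u : ℝ → ℝ → ℝ) (t : ℝ) : ℝ :=
  1 / 2 * (∫ x in (0:ℝ)..(s t), (deriv (u t) x) ^ 2) - u t 0 ^ (p + 1) / (p + 1)

lemma aux_left {f : ℝ → ℝ} {d b : ℝ} (h : HasDerivWithinAt f d (Iic b) b)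
    (hf : ∀ᶠ x in 𝓝[<] b, f x ≤ f b) : 0 ≤ d := by
  have h1 : Tendsto (slope f b) (𝓝[<] b) (𝓝 d) := by
    have := hasDerivWithinAt_iff_tendsto_slope.1 h
    rwa [Iic_sdiff_right] at this
  refine ge_of_tendsto h1 ?_
  filter_upwards [hf, self_mem_nhdsWithin] with x hx hxb
  rw [slope_def_field]
  have : x < b := hxb
  exact div_nonneg_of_nonpos (by linarith) (by linarith)

lemma aux_right {f : ℝ → ℝ} {d b : ℝ} (h : HasDerivWithinAt f d (Ici b) b)
    (hf : ∀ᶠ x in 𝓝[>] b, f b ≤ f x) : 0 ≤ d := by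
  have h1 : Tendsto (slope f b) (𝓝[>] b) (𝓝 d) := by
    have := hasDerivWithinAt_iff_tendsto_slope.1 h
    rwa [Ici_sdiff_left] at this
  refine ge_of_tendsto h1 ?_
  filter_upwards [hf, self_mem_nhdsWithin] with x hx hxb
  rw [slope_def_field]
  have : b < x := hxb
  exact div_nonneg (by linarith) (by linarith)

lemma aux_second {f : ℝ → ℝ} {x : ℝ} (hmin : IsLocalMin f x) (hc : ContinuousAt f x) :
    0 ≤ deriv (deriv f) x := by
  by_contra hneg
  push Not at hneg
  have hmax := isLocalMax_of_deriv_deriv_neg hneg hmin.deriv_eq_zero hc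
  have hconst : f =ᶠ[𝓝 x] fun _ => f x := by
    filter_upwards [hmin, hmax] with y h1 h2
    exact le_antisymm h2 h1
  have h2 := hconst.deriv.deriv_eq
  simp at h2
  linarith

lemma sol_slice_cont {p s₀ : ℝ} {φ : ℝ → ℝ} {T : ℝ} {s : ℝ → ℝ} {u : ℝ → ℝ → ℝ}
    (h : IsSolOn p s₀ φ T s u) {t : ℝ} (ht : t ∈ Ioc 0 T) :
    ContinuousOn (u t) (Icc 0 (s t)) :=
  h.u_cont.comp (f := fun x => (t, x)) (by fun_prop)
    (fun x hx => ⟨Ioc_subset_Icc_self ht, hx⟩)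

lemma sol_slice_dcont {p s₀ : ℝ} {φ : ℝ → ℝ} {T : ℝ} {s : ℝ → ℝ} {u : ℝ → ℝ → ℝ}
    (h : IsSolOn p s₀ φ T s u) {t : ℝ} (ht : t ∈ Ioc 0 T) :
    ContinuousOn (deriv (u t)) (Icc 0 (s t)) :=
  h.ux_cont.comp (f := fun x => (t, x)) (by fun_prop) (fun x hx => ⟨ht, hx⟩)

lemma sol_left {p s₀ : ℝ} {φ : ℝ → ℝ} {T : ℝ} {s : ℝ → ℝ} {u : ℝ → ℝ → ℝ}
    (h : IsSolOn p s₀ φ T s u) {t : ℝ} (ht : t ∈ Ioc 0 T) :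
    HasDerivWithinAt (u t) (deriv (u t) 0) (Ici 0) 0 := by
  have hs := h.s_pos t (Ioc_subset_Icc_self ht)
  refine hasDerivWithinAt_Ici_of_tendsto_deriv (s := Ioo 0 (s t))
    (fun x hx => (h.ux_diff t ht x hx).differentiableWithinAt)
    (((sol_slice_cont h ht) 0 ⟨le_rfl, hs.le⟩).mono Ioo_subset_Icc_self)
    (Ioo_mem_nhdsGT hs) ?_
  have := ((sol_slice_dcont h ht) 0 ⟨le_rfl, hs.le⟩).mono Ioo_subset_Icc_self
  unfold ContinuousWithinAt at this
  rwa [nhdsWithin_Ioo_eq_nhdsGT hs] at this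

lemma sol_right {p s₀ : ℝ} {φ : ℝ → ℝ} {T : ℝ} {s : ℝ → ℝ} {u : ℝ → ℝ → ℝ}
    (h : IsSolOn p s₀ φ T s u) {t : ℝ} (ht : t ∈ Ioc 0 T) :
    HasDerivWithinAt (u t) (deriv (u t) (s t)) (Iic (s t)) (s t) := by
  have hs := h.s_pos t (Ioc_subset_Icc_self ht)
  refine hasDerivWithinAt_Iic_of_tendsto_deriv (s := Ioo 0 (s t))
    (fun x hx => (h.ux_diff t ht x hx).differentiableWithinAt)
    (((sol_slice_cont h ht) (s t) ⟨hs.le, le_rfl⟩).mono Ioo_subset_Icc_self)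
    (Ioo_mem_nhdsLT hs) ?_
  have := ((sol_slice_dcont h ht) (s t) ⟨hs.le, le_rfl⟩).mono Ioo_subset_Icc_self
  unfold ContinuousWithinAt at this
  rwa [nhdsWithin_Ioo_eq_nhdsLT hs] at this

lemma sol_deriv_nonneg {p s₀ : ℝ} {φ : ℝ → ℝ} {T : ℝ} {s : ℝ → ℝ} {u : ℝ → ℝ → ℝ}
    (h : IsSolOn p s₀ φ T s u) {t : ℝ} (ht : t ∈ Ioc 0 T) : 0 ≤ deriv s t := by
  have hs := h.s_pos t (Ioc_subset_Icc_self ht)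
  rw [h.stefan t ht]
  refine aux_left (sol_right h ht).neg ?_
  filter_upwards [Ioo_mem_nhdsLT hs] with x hx
  have := h.u_nonneg t (Ioc_subset_Icc_self ht) x (Ioo_subset_Icc_self hx)
  simp only [Pi.neg_apply]
  rw [h.bc_free t ht]
  linarith

lemma sol_upper {p T s₀ : ℝ} {φ : ℝ → ℝ} {s : ℝ → ℝ} {u : ℝ → ℝ → ℝ}
    (h : IsSolOn p s₀ φ T s u) {M : ℝ} (hM : 0 < M)
    (hφ : ∀ x ∈ Icc 0 s₀, 0 ≤ φ x ∧ φ x ≤ M * (s₀ - x))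
    (hu0 : ∀ t ∈ Ioc 0 T, 0 ≤ u t 0 ^ p ∧ u t 0 ^ p ≤ M) :
    ∀ t ∈ Icc 0 T, ∀ x ∈ Icc 0 (s t), u t x ≤ M * (s t - x) := by
  intro t₁ ht₁ x₁ hx₁
  by_contra hcon
  push Not at hcon
  obtain ⟨A, hA⟩ := (isCompact_Icc.image_of_continuousOn h.s_cont).bddAbove
  have hA' : ∀ t ∈ Icc 0 T, s t ≤ A := fun t ht => hA ⟨t, ht, rfl⟩
  have hT := h.T_pos
  have hApos : 0 < A := (h.s_pos 0 ⟨le_rfl, hT.le⟩).trans_le (hA' 0 ⟨le_rfl, hT.le⟩)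
  set K : Set (ℝ × ℝ) := {q | q.1 ∈ Icc 0 T ∧ q.2 ∈ Icc 0 (s q.1)} with hK
  obtain ⟨ε, hε, hε2⟩ : ∃ ε > 0, M * (s t₁ - x₁) - u t₁ x₁ + ε * (T + A) < 0 := by
    refine ⟨(u t₁ x₁ - M * (s t₁ - x₁)) / (2 * (T + A)), by apply div_pos <;> linarith, ?_⟩
    have : (u t₁ x₁ - M * (s t₁ - x₁)) / (2 * (T + A)) * (T + A)
        = (u t₁ x₁ - M * (s t₁ - x₁)) / 2 := by
      field_simp
    rw [this]; linarith
  have hs2 : ContinuousOn (fun q : ℝ × ℝ => s q.1) K :=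
    h.s_cont.comp continuous_fst.continuousOn (fun q hq => hq.1)
  have hKc : IsCompact K := by
    have h1 : IsCompact (Icc (0:ℝ) T ×ˢ Icc (0:ℝ) 1) := isCompact_Icc.prod isCompact_Icc
    have h2 : ContinuousOn (fun q : ℝ × ℝ => (q.1, q.2 * s q.1)) (Icc (0:ℝ) T ×ˢ Icc (0:ℝ) 1) := by
      have : ContinuousOn (fun q : ℝ × ℝ => s q.1) (Icc (0:ℝ) T ×ˢ Icc (0:ℝ) 1) :=
        h.s_cont.comp continuous_fst.continuousOn (fun q hq => hq.1)
      exact continuous_fst.continuousOn.prodMk (continuous_snd.continuousOn.mul this)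
    convert h1.image_of_continuousOn h2 using 1
    ext ⟨t, x⟩
    constructor
    · rintro ⟨ht, hx⟩
      have hs := h.s_pos t ht
      refine ⟨(t, x / s t), ⟨ht, div_nonneg hx.1 hs.le, (div_le_one hs).2 hx.2⟩, ?_⟩
      simp only [Prod.mk.injEq, true_and]
      field_simp
    · rintro ⟨⟨t', y⟩, ⟨ht, hy⟩, heq⟩
      simp only [Prod.mk.injEq] at heq
      obtain ⟨rfl, rfl⟩ := heq
      have hs := h.s_pos t' ht
      exact ⟨ht, mul_nonneg hy.1 hs.le, mul_le_of_le_one_left hs.le hy.2⟩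
  have hvc : ContinuousOn (fun q : ℝ × ℝ =>
      M * (s q.1 - q.2) - u q.1 q.2 + ε * (q.1 + A - q.2)) K := by
    exact ((continuousOn_const.mul (hs2.sub continuous_snd.continuousOn)).sub h.u_cont).add
      (continuousOn_const.mul ((continuous_fst.continuousOn.add continuousOn_const).sub
        continuous_snd.continuousOn))
  obtain ⟨⟨t, x⟩, ⟨ht, hx⟩, hmin⟩ := hKc.exists_isMinOn ⟨(t₁, x₁), ht₁, hx₁⟩ hvc
  simp only at ht hx
  have hmin' : ∀ t' ∈ Icc 0 T, ∀ x' ∈ Icc 0 (s t'),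
      M * (s t - x) - u t x + ε * (t + A - x) ≤ M * (s t' - x') - u t' x' + ε * (t' + A - x') :=
    fun t' ht' x' hx' => isMinOn_iff.1 hmin (t', x') ⟨ht', hx'⟩
  have hneg : M * (s t - x) - u t x + ε * (t + A - x) < 0 := by
    have h1 := hmin' t₁ ht₁ x₁ hx₁
    have h2 : ε * (t₁ + A - x₁) ≤ ε * (T + A) :=
      mul_le_mul_of_nonneg_left (by linarith [ht₁.2, hx₁.1]) hε.le
    linarith
  have hpen : 0 ≤ ε * (t + A - x) :=
    mul_nonneg hε.le (by linarith [ht.1, hx.2, hA' t ht])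
  -- the minimum is not attained at the initial time
  have ht0 : 0 < t := by
    rcases ht.1.eq_or_lt with h0 | h0
    · exfalso
      subst h0
      rw [h.init_s] at hx hneg
      rw [h.init x hx] at hneg
      linarith [(hφ x hx).2]
    · exact h0
  have ht' : t ∈ Ioc 0 T := ⟨ht0, ht.2⟩
  have hxs : x < s t := by
    rcases hx.2.eq_or_lt with h0 | h0
    · exfalso
      subst h0
      rw [h.bc_free t ht'] at hneg
      linarith
    · exact h0
  have hs := h.s_pos t ht
  rcases hx.1.eq_or_lt with h0 | hx0
  · subst h0
    have hd : HasDerivWithinAt (fun y => M * (s t - y) - u t y + ε * (t + A - y))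
        (M * (0 - 1) - deriv (u t) 0 + ε * (0 - 1)) (Ici 0) 0 := by
      have hid := hasDerivWithinAt_id (0:ℝ) (Ici 0)
      exact ((((hasDerivWithinAt_const _ _ _).sub hid).const_mul M).sub (sol_left h ht')).add
        (((hasDerivWithinAt_const _ _ _).sub hid).const_mul ε)
    have := aux_right hd (by
      filter_upwards [Ioo_mem_nhdsGT hs] with y hy
      exact hmin' t ht y (Ioo_subset_Icc_self hy))
    have h1 := h.bc_zero t ht'
    have h2 := (hu0 t ht').2
    linarith
  · have hxI : x ∈ Ioo 0 (s t) := ⟨hx0, hxs⟩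
    -- time derivative
    have hdt : HasDerivAt (fun τ => -(M * (s τ - x) - u τ x + ε * (τ + A - x)))
        (-(M * deriv s t - deriv (fun τ => u τ x) t + ε * 1)) t := by
      exact (((((h.s_diff t ht').hasDerivAt.sub_const x).const_mul M).sub
        (h.ut_diff t ht' x hxI).hasDerivAt).add
        ((((hasDerivAt_id t).add_const A).sub_const x).const_mul ε)).neg
    have hT1 := aux_left hdt.hasDerivWithinAt (by
      have hcs : ContinuousWithinAt s (Iio t) t :=
        (h.s_diff t ht').continuousAt.continuousWithinAt
      filter_upwards [hcs.eventually (lt_mem_nhds hxs), Ioo_mem_nhdsLT ht0] with τ h1 h2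
      have := hmin' τ ⟨h2.1.le, h2.2.le.trans ht.2⟩ x ⟨hx0.le, h1.le⟩
      linarith)
    -- space derivative
    have hdx : ∀ y ∈ Ioo 0 (s t), HasDerivAt
        (fun y => M * (s t - y) - u t y + ε * (t + A - y))
        (M * (0 - 1) - deriv (u t) y + ε * (0 - 1)) y := by
      intro y hy
      have hid := hasDerivAt_id y
      exact ((((hasDerivAt_const _ _).sub hid).const_mul M).sub
        (h.ux_diff t ht' y hy).hasDerivAt).add
        (((hasDerivAt_const _ _).sub hid).const_mul ε)
    have hnh : Ioo 0 (s t) ∈ 𝓝 x := Ioo_mem_nhds hx0 hxs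
    have hX := aux_second (f := fun y => M * (s t - y) - u t y + ε * (t + A - y)) (x := x)
      (by filter_upwards [hnh] with y hy
          exact hmin' t ht y (Ioo_subset_Icc_self hy))
      (hdx x hxI).continuousAt
    have hdd : deriv (fun y => M * (s t - y) - u t y + ε * (t + A - y)) =ᶠ[𝓝 x]
        fun y => M * (0 - 1) - deriv (u t) y + ε * (0 - 1) := by
      filter_upwards [hnh] with y hy
      exact (hdx y hy).deriv
    rw [hdd.deriv_eq] at hX
    have h3 := (((h.uxx_diff t ht' x hxI).hasDerivAt.const_sub (M * (0 - 1))).add_const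
      (ε * (0 - 1))).deriv
    rw [h3] at hX
    have h4 := h.heat t ht' x hxI
    have h5 := mul_nonneg hM.le (sol_deriv_nonneg h ht')
    linarith

/-- Lemma 2.2: pointwise bound `u(t,x) ≤ M (s(t) - x)`. -/
theorem stmt_6 (p : ℝ) (hp : 1 < p) (T : ℝ) (hT : 0 < T) (s₀ : ℝ) (φ : ℝ → ℝ)
    (hW : memW s₀ φ) (s : ℝ → ℝ) (u : ℝ → ℝ → ℝ) (hsol : IsSolOn p s₀ φ T s u)
    (M : ℝ) (hM : 0 < M)
    (hφ : ∀ x ∈ Icc 0 s₀, 0 ≤ φ x ∧ φ x ≤ M * (s₀ - x))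
    (hu0 : ∀ t ∈ Ioc 0 T, 0 ≤ u t 0 ^ p ∧ u t 0 ^ p ≤ M) :
    (∀ t ∈ Icc 0 T, ∀ x ∈ Icc 0 (s t), 0 ≤ u t x ∧ u t x ≤ M * (s t - x)) ∧
    ∀ t ∈ Ioc 0 T, deriv s t = -deriv (u t) (s t) ∧ deriv s t ≤ M := by
  have hup := sol_upper hsol hM hφ hu0
  refine ⟨fun t ht x hx => ⟨hsol.u_nonneg t ht x hx, hup t ht x hx⟩, fun t ht =>
    ⟨hsol.stefan t ht, ?_⟩⟩
  have hs := hsol.s_pos t (Ioc_subset_Icc_self ht)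
  have hd : HasDerivWithinAt (fun y => u t y - M * (s t - y))
      (deriv (u t) (s t) - M * (0 - 1)) (Iic (s t)) (s t) :=
    (sol_right hsol ht).sub
      (((hasDerivWithinAt_const _ _ _).sub (hasDerivWithinAt_id _ _)).const_mul M)
  have := aux_left hd (by
    filter_upwards [Ioo_mem_nhdsLT hs] with y hy
    have := hup t (Ioc_subset_Icc_self ht) y (Ioo_subset_Icc_self hy)
    rw [hsol.bc_free t ht]
    linarith)
  rw [hsol.stefan t ht]
  linarith
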